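/- Let α, β, γ, μ be positive real numbers and let f be the generalized gamma density f(x) = (γ β^{α/γ} / Γ(α/γ)) (x−μ)^{α−1} e^{−β(x−μ)^γ} for x > μ, and 0 otherwise. Let c and s be real numbers with 0 < c < α/γ and s < 1 − α + γc. Then the Mellin transform of f admits the Mellin–Barnes representation: ∫_μ^∞ x^{s−1} f(x) dx = (γ β^{α/γ} μ^{α+s−1} / (Γ(α/γ) Γ(1 − s))) · (1/(2π)) ∫_{t ∈ ℝ} Γ(c+it) Γ(α − γ(c+it)) Γ(1 − s − α + γ(c+it)) · (β μ^γ)^{−(c+it)} dt, where Γ is the complex Gamma function and the t-integral is a Lebesgue integral of a complex-valued function. -/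

import Mathlib

/-!
The substitution `x = μ (1 + v)` turns the left-hand side into a constant times
`∫₀^∞ v^(α-1) (1+v)^(s-1) exp(-A v^γ) dv` with `A = β μ^γ`. Writing `exp(-A v^γ)` as the
Cahen–Mellin integral `(1/2π) ∫ Γ(z) (A v^γ)^(-z) dt` over `z = c + it` (`cahen_mellin`) and
exchanging the two integrals leaves, for each `z`, the Beta integral
`∫₀^∞ v^(α-γz-1) (1+v)^(s-1) dv = Γ(α-γz) Γ(1-s-α+γz) / Γ(1-s)` (`betaPrime_integral`).

Fubini applies because the modulus of the joint integrand is `A^(-c) |Γ(c+it)|` times the Beta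
integrand at `z = c`: a product of a function of `t`, integrable by the functional equation of `Γ`
(`integrable_Gamma_vertical`), and a function of `v`, integrable because
`0 < α - γc` and `0 < 1 - s - α + γc`.
-/

open MeasureTheory Real

/-- The generalized gamma probability density function with parameters
`α, β, γ > 0` and shift `μ`. -/
noncomputable def genGammaPDF (α β γ μ : ℝ) (x : ℝ) : ℝ :=
  if μ < x then (γ * β ^ (α / γ) / Real.Gamma (α / γ)) * (x - μ) ^ (α - 1) *
    Real.exp (-β * (x - μ) ^ γ)
  else 0

/-- The Beta integral transported to `(0, ∞)` by `x = v / (1 + v)`, with convergence. -/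
lemma betaPrime_integral {u w : ℂ} (hu : 0 < u.re) (hw : 0 < w.re) :
    IntegrableOn (fun v : ℝ => (v : ℂ) ^ (u - 1) * (1 + (v : ℂ)) ^ (-(u + w))) (Set.Ioi 0) ∧
    ∫ v in Set.Ioi (0 : ℝ), (v : ℂ) ^ (u - 1) * (1 + (v : ℂ)) ^ (-(u + w)) =
      Complex.Gamma u * Complex.Gamma w / Complex.Gamma (u + w) := by
  set g : ℝ → ℂ := fun x => (x : ℂ) ^ (u - 1) * (1 - (x : ℂ)) ^ (w - 1) with hg
  set φ : ℝ → ℝ := fun v => v / (1 + v) with hφ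
  have hder : ∀ v ∈ Set.Ioi (0 : ℝ),
      HasDerivWithinAt φ (1 / (1 + v) ^ 2) (Set.Ioi 0) v := by
    intro v hv
    have hv : 0 < v := hv
    have h1 : 1 + v ≠ 0 := by positivity
    have h : HasDerivAt φ ((1 * (1 + v) - v * 1) / (1 + v) ^ 2) v :=
      (hasDerivAt_id' v).div ((hasDerivAt_id' v).const_add 1) h1
    have e : (1 * (1 + v) - v * 1) / (1 + v) ^ 2 = 1 / (1 + v) ^ 2 := by ring
    exact (e ▸ h).hasDerivWithinAt
  have hinj : Set.InjOn φ (Set.Ioi 0) := by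
    intro a ha b hb hab
    have ha : 0 < a := ha
    have hb : 0 < b := hb
    simp only [hφ] at hab
    rw [div_eq_div_iff (by positivity) (by positivity)] at hab
    linarith
  have himg : φ '' Set.Ioi 0 = Set.Ioo 0 1 := by
    ext x
    constructor
    · rintro ⟨v, hv, rfl⟩
      have hv : 0 < v := hv
      refine ⟨by simp only [hφ]; positivity, ?_⟩
      simp only [hφ]
      rw [div_lt_one (by positivity)]
      linarith
    · rintro ⟨h0, h1⟩
      have h2 : 0 < 1 - x := by linarith
      refine ⟨x / (1 - x), div_pos h0 h2, ?_⟩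
      simp only [hφ]
      field_simp
      ring
  have hpt : ∀ v ∈ Set.Ioi (0 : ℝ), |1 / (1 + v) ^ 2| • g (φ v) =
      (v : ℂ) ^ (u - 1) * (1 + (v : ℂ)) ^ (-(u + w)) := by
    intro v hv
    have hv : 0 < v := hv
    have h1 : 0 < 1 + v := by linarith
    have h1c : ((1 + v : ℝ) : ℂ) ≠ 0 := by exact_mod_cast h1.ne'
    have e1 : (1 : ℂ) - ((φ v : ℝ) : ℂ) = (((1 + v)⁻¹ : ℝ) : ℂ) := by
      rw [← Complex.ofReal_one, ← Complex.ofReal_sub]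
      congr 1
      simp only [hφ]
      field_simp
      ring
    have e2 : ((φ v : ℝ) : ℂ) = (v : ℂ) * (((1 + v)⁻¹ : ℝ) : ℂ) := by
      rw [← Complex.ofReal_mul]; rfl
    have e3 : ∀ p : ℂ, (((1 + v)⁻¹ : ℝ) : ℂ) ^ p = ((1 + v : ℝ) : ℂ) ^ (-p) := by
      intro p
      rw [Complex.ofReal_inv, Complex.inv_cpow _ _ (by
        rw [Complex.arg_ofReal_of_nonneg h1.le]; exact Real.pi_pos.ne), Complex.cpow_neg]
    have e4 : ((|1 / (1 + v) ^ 2| : ℝ) : ℂ) = ((1 + v : ℝ) : ℂ) ^ (-2 : ℂ) := by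
      rw [abs_of_nonneg (by positivity), Complex.cpow_neg]
      norm_num
    simp only [hg]
    rw [Complex.real_smul, e1, e2, Complex.mul_cpow_ofReal_nonneg hv.le (by positivity), e3, e3,
      e4, show (1 : ℂ) + (v : ℂ) = ((1 + v : ℝ) : ℂ) by push_cast; ring,
      show -(u + w) = -2 + (-(u - 1) + -(w - 1)) by ring, Complex.cpow_add _ _ h1c,
      Complex.cpow_add _ _ h1c]
    ring
  have hint : IntegrableOn g (Set.Ioo 0 1) :=
    ((intervalIntegrable_iff_integrableOn_Ioo_of_le zero_le_one).1
      (Complex.betaIntegral_convergent hu hw))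
  constructor
  · rw [← himg, integrableOn_image_iff_integrableOn_abs_deriv_smul measurableSet_Ioi hder hinj]
      at hint
    exact hint.congr_fun hpt measurableSet_Ioi
  · rw [← Complex.betaIntegral_eq_Gamma_mul_div u w hu hw, Complex.betaIntegral,
      intervalIntegral.integral_of_le zero_le_one, integral_Ioc_eq_integral_Ioo, ← himg,
      integral_image_eq_integral_abs_deriv_smul measurableSet_Ioi hder hinj]
    exact (setIntegral_congr_fun measurableSet_Ioi hpt).symm

lemma norm_Gamma_le_Gamma_re {z : ℂ} (hz : 0 < z.re) :
    ‖Complex.Gamma z‖ ≤ Real.Gamma z.re := by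
  rw [Complex.Gamma_eq_integral hz, Real.Gamma_eq_integral hz, Complex.GammaIntegral]
  refine (norm_integral_le_integral_norm _).trans (le_of_eq ?_)
  refine setIntegral_congr_fun measurableSet_Ioi fun x hx => ?_
  have hx : 0 < x := hx
  simp [Complex.norm_cpow_eq_rpow_re_of_pos hx, Complex.norm_exp]

/-- Two steps of the functional equation give `‖Γ(c + it)‖ ≤ Γ(c + 2) / (c² + t²)`, which is
integrable in `t`. -/
lemma integrable_Gamma_vertical {c : ℝ} (hc : 0 < c) :
    Integrable (fun t : ℝ => Complex.Gamma (c + t * Complex.I)) := by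
  have hre : ∀ t : ℝ, ((c : ℂ) + t * Complex.I).re = c := by intro t; simp
  have hcont : Continuous (fun t : ℝ => Complex.Gamma (c + t * Complex.I)) := by
    rw [continuous_iff_continuousAt]
    intro t
    refine ContinuousAt.comp (f := fun t : ℝ => (c : ℂ) + t * Complex.I) ?_ (by fun_prop)
    refine (Complex.differentiableAt_Gamma _ fun m hm => ?_).continuousAt
    have h := congrArg Complex.re hm
    rw [hre] at h
    simp only [Complex.neg_re, Complex.natCast_re] at h
    have : (0 : ℝ) ≤ m := m.cast_nonneg
    linarith
  have hbd : Integrable (fun t : ℝ => Real.Gamma (c + 2) * (c ^ 2 + t ^ 2)⁻¹) := by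
    refine Integrable.const_mul ?_ _
    refine ((integrable_inv_one_add_sq.comp_mul_left' (inv_ne_zero hc.ne')).const_mul
      (c ^ 2)⁻¹).congr (.of_forall fun t => ?_)
    dsimp only
    rw [← mul_inv]
    congr 1
    field_simp
  refine hbd.mono' hcont.aestronglyMeasurable (.of_forall fun t => ?_)
  set z : ℂ := c + t * Complex.I with hz
  have hzre : z.re = c := hre t
  have hzim : z.im = t := by simp [hz]
  have hz0 : z ≠ 0 := fun h => by rw [h] at hzre; simp at hzre; linarith
  have hz1 : z + 1 ≠ 0 := fun h => by
    have := congrArg Complex.re h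
    simp [hzre] at this; linarith
  have hG : Complex.Gamma (z + 2) = (z + 1) * (z * Complex.Gamma z) := by
    rw [show z + 2 = z + 1 + 1 by ring, Complex.Gamma_add_one _ hz1, Complex.Gamma_add_one _ hz0]
  have h2 : ‖Complex.Gamma (z + 2)‖ ≤ Real.Gamma (c + 2) := by
    have := norm_Gamma_le_Gamma_re (z := z + 2) (by simp [hzre]; linarith)
    simpa [hzre] using this
  have hn : ‖z‖ ^ 2 = c ^ 2 + t ^ 2 := by
    rw [Complex.sq_norm, Complex.normSq_apply, hzre, hzim]; ring
  have hn1 : ‖z‖ ≤ ‖z + 1‖ := by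
    refine le_of_sq_le_sq ?_ (norm_nonneg _)
    rw [Complex.sq_norm, Complex.sq_norm, Complex.normSq_apply, Complex.normSq_apply]
    simp [hzre, hzim]
    nlinarith
  rw [← div_eq_mul_inv, le_div_iff₀ (by positivity), ← hn]
  rw [hG, norm_mul, norm_mul] at h2
  nlinarith [mul_le_mul_of_nonneg_right hn1
    (mul_nonneg (norm_nonneg z) (norm_nonneg (Complex.Gamma z)))]

/-- The Cahen–Mellin integral: Mellin inversion applied to the integral defining `Γ`. -/
lemma cahen_mellin {c x : ℝ} (hc : 0 < c) (hx : 0 < x) :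
    ((1 / (2 * Real.pi) : ℂ) * ∫ t : ℝ, (x : ℂ) ^ (-(c + t * Complex.I)) *
      Complex.Gamma (c + t * Complex.I)) = (Real.exp (-x) : ℂ) := by
  have hM : ∀ z : ℂ, 0 < z.re →
      mellin (fun x : ℝ => ((Real.exp (-x) : ℝ) : ℂ)) z = Complex.Gamma z := by
    intro z hz
    rw [Complex.Gamma_eq_integral hz, Complex.GammaIntegral_eq_mellin]
  have hre : ∀ t : ℝ, 0 < ((c : ℂ) + t * Complex.I).re := by intro t; simpa using hc
  have h := mellinInv_mellin_eq c (fun x : ℝ => ((Real.exp (-x) : ℝ) : ℂ)) hx ?_ ?_ ?_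
  · rw [← h, mellinInv, Complex.real_smul]
    simp only [smul_eq_mul, hM _ (hre _)]
    push_cast
    rfl
  · have := Complex.GammaIntegral_convergent (s := c) (by simpa using hc)
    refine this.congr_fun (fun x _ => ?_) measurableSet_Ioi
    simp [mul_comm]
  · exact (integrable_Gamma_vertical hc).congr (.of_forall fun t => (hM _ (hre t)).symm)
  · fun_prop

/-- The substitution `x = μ (1 + v)`. -/
lemma mellin_genGammaPDF_eq (α β γ μ s : ℝ) (hμ : 0 < μ) :
    ∫ x in Set.Ioi μ, x ^ (s - 1) * genGammaPDF α β γ μ x =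
      (γ * β ^ (α / γ) / Real.Gamma (α / γ) * μ ^ (α + s - 1)) *
        ∫ v in Set.Ioi (0 : ℝ), v ^ (α - 1) * (1 + v) ^ (s - 1) *
          Real.exp (-((β * μ ^ γ) * v ^ γ)) := by
  have himg : (fun v : ℝ => μ * (1 + v)) '' Set.Ioi 0 = Set.Ioi μ := by
    ext x
    constructor
    · rintro ⟨v, hv, rfl⟩
      have hv : 0 < v := hv
      change μ < μ * (1 + v)
      nlinarith
    · intro hx
      have hx : μ < x := hx
      refine ⟨x / μ - 1, ?_, ?_⟩
      · change 0 < x / μ - 1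
        rw [sub_pos, one_lt_div hμ]
        exact hx
      · dsimp only
        field_simp
        ring
  have hder : ∀ v ∈ Set.Ioi (0 : ℝ),
      HasDerivWithinAt (fun v : ℝ => μ * (1 + v)) μ (Set.Ioi 0) v := by
    intro v _
    simpa using (((hasDerivAt_id v).const_add 1).const_mul μ).hasDerivWithinAt
  have hinj : Set.InjOn (fun v : ℝ => μ * (1 + v)) (Set.Ioi 0) := by
    intro a _ b _ hab
    have := mul_left_cancel₀ hμ.ne' hab
    linarith
  rw [← himg, integral_image_eq_integral_abs_deriv_smul measurableSet_Ioi hder hinj,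
    ← integral_const_mul]
  refine setIntegral_congr_fun measurableSet_Ioi fun v hv => ?_
  have hv : 0 < v := hv
  have h1 : 0 < 1 + v := by linarith
  have hlt : μ < μ * (1 + v) := by nlinarith
  have hsub : μ * (1 + v) - μ = μ * v := by ring
  simp only [genGammaPDF, if_pos hlt, hsub, abs_of_pos hμ, smul_eq_mul]
  rw [Real.mul_rpow hμ.le h1.le, Real.mul_rpow hμ.le hv.le, Real.mul_rpow hμ.le hv.le,
    show α + s - 1 = 1 + ((s - 1) + (α - 1)) by ring, Real.rpow_add hμ, Real.rpow_add hμ,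
    Real.rpow_one, show -β * (μ ^ γ * v ^ γ) = -(β * μ ^ γ * v ^ γ) by ring]
  ring

/-- Mellin–Barnes representation of the Mellin transform of the shifted
generalized gamma density: for `α, β, γ, μ > 0`, `0 < c < α/γ` and `s < 1 - α + γ c`,
`∫_μ^∞ x^(s-1) f(x) dx = (γ β^(α/γ) μ^(α+s-1) / (Γ(α/γ) Γ(1-s))) ·
  (1/(2π)) ∫_{t∈ℝ} Γ(c+it) Γ(α-γ(c+it)) Γ(1-s-α+γ(c+it)) (β μ^γ)^{-(c+it)} dt`. -/
theorem mellin_genGammaPDF_mellinBarnes (α β γ μ c s : ℝ)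
    (hα : 0 < α) (hβ : 0 < β) (hγ : 0 < γ) (hμ : 0 < μ)
    (hc0 : 0 < c) (hc1 : c < α / γ) (hs : s < 1 - α + γ * c) :
    ((∫ x in Set.Ioi μ, x ^ (s - 1) * genGammaPDF α β γ μ x : ℝ) : ℂ) =
      ((γ * β ^ (α / γ) * μ ^ (α + s - 1) /
          (Real.Gamma (α / γ) * Real.Gamma (1 - s)) : ℝ) : ℂ) *
        ((1 / (2 * Real.pi) : ℂ) *
          ∫ t : ℝ, Complex.Gamma (c + t * Complex.I) *
            Complex.Gamma ((α : ℂ) - γ * (c + t * Complex.I)) *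
            Complex.Gamma (1 - (s : ℂ) - α + γ * (c + t * Complex.I)) *
            ((β * μ ^ γ : ℝ) : ℂ) ^ (-(c + t * Complex.I))) := by
  obtain ⟨A, hA⟩ : ∃ A : ℝ, A = β * μ ^ γ := ⟨_, rfl⟩
  simp only [← hA]
  have hA0 : 0 < A := by rw [hA]; positivity
  have hu0 : 0 < α - γ * c := by
    rw [lt_div_iff₀ hγ] at hc1
    linarith
  have hw0 : 0 < 1 - s - α + γ * c := by linarith
  -- the vertical line, the two Beta parameters, and the joint integrand
  set z : ℝ → ℂ := fun t => c + t * Complex.I with hz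
  set u : ℝ → ℂ := fun t => (α : ℂ) - γ * z t with hu
  set w : ℝ → ℂ := fun t => 1 - (s : ℂ) - α + γ * z t with hw
  have hure : ∀ t, (u t).re = α - γ * c := by intro t; simp [hu, hz]
  have hwre : ∀ t, (w t).re = 1 - s - α + γ * c := by intro t; simp [hw, hz]
  have huw : ∀ t, u t + w t = ((1 - s : ℝ) : ℂ) := by intro t; simp only [hu, hw]; push_cast; ring
  set F : ℝ → ℝ → ℂ := fun v t => Complex.Gamma (z t) * (A : ℂ) ^ (-(z t)) *
    ((v : ℂ) ^ (u t - 1) * (1 + (v : ℂ)) ^ (-(u t + w t))) with hF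
  -- integrating `F` in `v` gives the Beta function
  have hinner : ∀ t, ∫ v in Set.Ioi (0 : ℝ), F v t = (Real.Gamma (1 - s) : ℂ)⁻¹ *
      (Complex.Gamma (z t) * Complex.Gamma (u t) * Complex.Gamma (w t) * (A : ℂ) ^ (-(z t))) := by
    intro t
    simp only [hF]
    rw [integral_const_mul, (betaPrime_integral (by rw [hure]; exact hu0)
      (by rw [hwre]; exact hw0)).2, huw, Complex.Gamma_ofReal]
    ring
  -- integrating `F` in `t` gives the exponential
  have houter : ∀ v ∈ Set.Ioi (0 : ℝ), (1 / (2 * Real.pi) : ℂ) * ∫ t, F v t =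
      ((v ^ (α - 1) * (1 + v) ^ (s - 1) * Real.exp (-(A * v ^ γ)) : ℝ) : ℂ) := by
    intro v hv
    have hv : 0 < v := hv
    have h1 : 0 < 1 + v := by linarith
    have hvc : (v : ℂ) ≠ 0 := by exact_mod_cast hv.ne'
    have hvγ : 0 < v ^ γ := Real.rpow_pos_of_pos hv γ
    have hpow : ∀ p : ℂ, ((v ^ γ : ℝ) : ℂ) ^ p = (v : ℂ) ^ ((γ : ℂ) * p) := by
      intro p
      rw [Complex.cpow_def_of_ne_zero (by exact_mod_cast hvγ.ne'), Complex.cpow_def_of_ne_zero hvc,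
        ← Complex.ofReal_log hvγ.le, ← Complex.ofReal_log hv.le, Real.log_rpow hv]
      push_cast
      ring_nf
    have hpt : ∀ t, F v t = ((v ^ (α - 1) * (1 + v) ^ (s - 1) : ℝ) : ℂ) *
        (((A * v ^ γ : ℝ) : ℂ) ^ (-(z t)) * Complex.Gamma (z t)) := by
      intro t
      simp only [hF]
      rw [huw, Complex.ofReal_mul, Complex.ofReal_mul,
        Complex.mul_cpow_ofReal_nonneg hA0.le hvγ.le, hpow, Complex.ofReal_cpow hv.le,
        Complex.ofReal_cpow h1.le,
        show u t - 1 = ((α - 1 : ℝ) : ℂ) + (γ : ℂ) * (-(z t)) by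
          simp only [hu]; push_cast; ring,
        Complex.cpow_add _ _ hvc]
      push_cast
      rw [show -(1 - (s : ℂ)) = (s : ℂ) - 1 by ring]
      ring
    simp only [hpt]
    rw [integral_const_mul, Complex.ofReal_mul _ (Real.exp _),
      ← cahen_mellin hc0 (mul_pos hA0 hvγ)]
    ring
  have hFint : Integrable (Function.uncurry F)
      ((volume.restrict (Set.Ioi (0 : ℝ))).prod volume) := by
    have hbeta := (betaPrime_integral (u := u 0) (w := w 0) (by rw [hure]; exact hu0)
      (by rw [hwre]; exact hw0)).1.norm
    have hprod := (hbeta.mul_prod (integrable_Gamma_vertical hc0).norm).const_mul (A ^ (-c))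
    refine hprod.mono' ?_ ?_
    · have hm : Measurable (fun p : ℝ × ℝ => (A : ℂ) ^ (-(z p.2)) *
          ((p.1 : ℂ) ^ (u p.2 - 1) * (1 + (p.1 : ℂ)) ^ (-(u p.2 + w p.2)))) := by
        have hzm : Measurable z := by simp only [hz]; fun_prop
        have hum : Measurable u := by simp only [hu]; fun_prop
        have hwm : Measurable w := by simp only [hw]; fun_prop
        fun_prop
      refine ((integrable_Gamma_vertical hc0).aestronglyMeasurable.comp_snd.mul
        hm.aestronglyMeasurable).congr (.of_forall fun p => ?_)
      simp only [Function.uncurry, hF, Pi.mul_apply]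
      ring
    · have hpos : ∀ᵐ p ∂((volume.restrict (Set.Ioi (0 : ℝ))).prod (volume : Measure ℝ)),
          0 < p.1 :=
        Measure.quasiMeasurePreserving_fst.ae (ae_restrict_mem measurableSet_Ioi)
      filter_upwards [hpos] with p hp
      have h1 : 0 < 1 + p.1 := by linarith
      refine le_of_eq ?_
      have hzre : (-(z p.2)).re = -c := by simp [hz]
      have hure1 : ∀ t, (u t - 1).re = α - γ * c - 1 := by
        intro t
        rw [Complex.sub_re, hure, Complex.one_re]
      simp only [Function.uncurry, hF, norm_mul]
      rw [show (1 : ℂ) + (p.1 : ℂ) = ((1 + p.1 : ℝ) : ℂ) by push_cast; ring,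
        Complex.norm_cpow_eq_rpow_re_of_pos hA0, Complex.norm_cpow_eq_rpow_re_of_pos hp,
        Complex.norm_cpow_eq_rpow_re_of_pos hp, hzre, huw, huw, hure1, hure1]
      ring
  have hΓ : (Real.Gamma (1 - s) : ℂ)⁻¹ * ∫ t, Complex.Gamma (z t) * Complex.Gamma (u t) *
      Complex.Gamma (w t) * (A : ℂ) ^ (-(z t)) = ∫ v in Set.Ioi (0 : ℝ), ∫ t, F v t := by
    rw [integral_integral_swap hFint, ← integral_const_mul]
    exact integral_congr_ae (.of_forall fun t => (hinner t).symm)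
  have hJ : ((∫ v in Set.Ioi (0 : ℝ), v ^ (α - 1) * (1 + v) ^ (s - 1) *
      Real.exp (-(A * v ^ γ)) : ℝ) : ℂ) =
      (1 / (2 * Real.pi) : ℂ) * ∫ v in Set.Ioi (0 : ℝ), ∫ t, F v t := by
    rw [← integral_complex_ofReal, ← integral_const_mul]
    exact setIntegral_congr_fun measurableSet_Ioi fun v hv => (houter v hv).symm
  rw [mellin_genGammaPDF_eq α β γ μ s hμ, Complex.ofReal_mul, ← hA, hJ, ← hΓ]
  push_cast
  ring
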